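/- Let 0 < ε < 1/2 and C > 0 be reals, and let R : ℕ → ℝ satisfy: R(1) ≤ C, and for every integer m ≥ 2 there exists an integer j with 1 ≤ j < m, m − j ≥ m^(1−ε)/2, and R(m) ≤ R(j) + 6·C·√(m − j). Then for every integer m ≥ 1, R(m) ≤ 48·C·m^((1+ε)/2). -/

import Mathlib

/-!
With `p = (1 + ε) / 2` we have `p ≥ 1 / 2` and `1 - ε = 2 * (1 - p)`. It is enough that the
potential `m ↦ K * m ^ p` grows from `j` to `m` by at least the cost `A * √(m - j)` of that step.
By AM-GM, `r ^ p ≤ √r ≤ (1 + r) / 2` for `r ∈ [0, 1]`; taking `r = j / m`, the increment of the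
power is at least `m ^ (p - 1) * (m - j) / 2`. A tail `m - j ≥ m ^ (2 * (1 - p)) / c` has
`√(m - j) ≥ m ^ (1 - p) / √c`, so this increment is at least `√(m - j) / (2 * √c)`.
-/

theorem rpow_le_one_add_div_two {r p : ℝ} (hr₀ : 0 ≤ r) (hr₁ : r ≤ 1) (hp : 1 / 2 ≤ p) :
    r ^ p ≤ (1 + r) / 2 :=
  calc r ^ p ≤ r ^ (1 / 2 : ℝ) :=
        Real.rpow_le_rpow_of_exponent_ge_of_imp hr₀ hr₁ hp fun _ hp₀ ↦ by linarith
    _ = √r := (Real.sqrt_eq_rpow r).symm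
    _ ≤ (1 + r) / 2 := by nlinarith [sq_nonneg (√r - 1), Real.sq_sqrt hr₀]

theorem rpow_sub_one_mul_sub_le_two_mul_rpow_sub_rpow {p x y : ℝ} (hp : 1 / 2 ≤ p)
    (hx : 0 < x) (hy : 0 ≤ y) (hyx : y ≤ x) : x ^ (p - 1) * (x - y) ≤ 2 * (x ^ p - y ^ p) := by
  have hratio : y ^ p / x ^ p ≤ (1 + y / x) / 2 := by
    rw [← Real.div_rpow hy hx.le]
    exact rpow_le_one_add_div_two (by positivity) (div_le_one_of_le₀ hyx hx.le) hp
  have hpow : y ^ p ≤ (1 + y / x) / 2 * x ^ p :=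
    (div_le_iff₀ (Real.rpow_pos_of_pos hx p)).mp hratio
  calc x ^ (p - 1) * (x - y) = 2 * (x ^ p - (1 + y / x) / 2 * x ^ p) := by
        rw [Real.rpow_sub_one hx.ne']
        field_simp
        ring
    _ ≤ 2 * (x ^ p - y ^ p) := by gcongr

theorem sqrt_sub_le_mul_rpow_sub_rpow {p c x y : ℝ} (hp : 1 / 2 ≤ p) (hc : 0 < c) (hx : 0 < x)
    (hy : 0 ≤ y) (hyx : y ≤ x) (hgap : x ^ (2 * (1 - p)) / c ≤ x - y) :
    √(x - y) ≤ 2 * √c * (x ^ p - y ^ p) := by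
  have hroot : x ^ (1 - p) ≤ √c * √(x - y) := by
    rw [← Real.sqrt_mul hc.le]
    apply Real.le_sqrt_of_sq_le
    rw [← Real.rpow_mul_natCast hx.le, Nat.cast_ofNat, mul_comm (1 - p)]
    exact (div_le_iff₀' hc).mp hgap
  have hcancel : x ^ (p - 1) * x ^ (1 - p) = 1 := by
    rw [← Real.rpow_add hx, sub_add_sub_cancel, sub_self, Real.rpow_zero]
  calc √(x - y) = x ^ (p - 1) * x ^ (1 - p) * √(x - y) := by rw [hcancel, one_mul]
    _ ≤ x ^ (p - 1) * (√c * √(x - y)) * √(x - y) := by gcongr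
    _ = √c * (x ^ (p - 1) * (x - y)) := by
        linear_combination x ^ (p - 1) * √c * Real.mul_self_sqrt (sub_nonneg.mpr hyx)
    _ ≤ √c * (2 * (x ^ p - y ^ p)) :=
        mul_le_mul_of_nonneg_left (rpow_sub_one_mul_sub_le_two_mul_rpow_sub_rpow hp hx hy hyx)
          (Real.sqrt_nonneg c)
    _ = 2 * √c * (x ^ p - y ^ p) := by ring

theorem le_of_exists_lt_sub_le_sub {G : Type*} [AddCommGroup G] [PartialOrder G]
    [IsOrderedAddMonoid G] {f g : ℕ → G} {k : ℕ} (hbase : f k ≤ g k)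
    (hstep : ∀ m, k < m → ∃ j, k ≤ j ∧ j < m ∧ f m - f j ≤ g m - g j) :
    ∀ m, k ≤ m → f m ≤ g m := by
  intro m
  induction m using Nat.strong_induction_on with
  | _ m ih =>
    intro hkm
    rcases hkm.eq_or_lt with rfl | hkm
    · exact hbase
    · obtain ⟨j, hkj, hjm, hincr⟩ := hstep m hkm
      simpa only [sub_add_cancel] using add_le_add hincr (ih j hjm hkj)

theorem eflh_regret_skeleton_general_general {ε c A : ℝ} (hε : 0 ≤ ε) (hc : 0 < c) (hA : 0 ≤ A)
    {R : ℕ → ℝ}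
    (hRrec : ∀ m : ℕ, 2 ≤ m → ∃ j : ℕ, 1 ≤ j ∧ j < m ∧
      (m : ℝ) ^ (1 - ε) / c ≤ (m : ℝ) - (j : ℝ) ∧
      R m ≤ R j + A * √((m : ℝ) - (j : ℝ))) :
    ∀ m : ℕ, 1 ≤ m → R m ≤ max (R 1) (2 * √c * A) * (m : ℝ) ^ ((1 + ε) / 2) := by
  set p := (1 + ε) / 2 with hp_def
  set K := max (R 1) (2 * √c * A)
  have hp : 1 / 2 ≤ p := by linarith
  have hexp : 1 - ε = 2 * (1 - p) := by rw [hp_def]; ring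
  have hbase : R 1 ≤ K * ((1 : ℕ) : ℝ) ^ p := by
    rw [Nat.cast_one, Real.one_rpow, mul_one]
    exact le_max_left _ _
  refine le_of_exists_lt_sub_le_sub hbase fun m hm ↦ ?_
  obtain ⟨j, hj, hjm, hgap, hR⟩ := hRrec m hm
  have hjm' : (j : ℝ) ≤ m := by exact_mod_cast hjm.le
  have hincr : 0 ≤ (m : ℝ) ^ p - (j : ℝ) ^ p := sub_nonneg.mpr (by gcongr)
  refine ⟨j, hj, hjm, ?_⟩
  calc R m - R j ≤ A * √((m : ℝ) - j) := sub_le_iff_le_add'.mpr hR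
    _ ≤ A * (2 * √c * ((m : ℝ) ^ p - (j : ℝ) ^ p)) := by
        gcongr
        exact sqrt_sub_le_mul_rpow_sub_rpow hp hc (by positivity) j.cast_nonneg hjm' (hexp ▸ hgap)
    _ = 2 * √c * A * ((m : ℝ) ^ p - (j : ℝ) ^ p) := by ring
    _ ≤ K * ((m : ℝ) ^ p - (j : ℝ) ^ p) := by
        gcongr
        exact le_max_right _ _
    _ = K * (m : ℝ) ^ p - K * (j : ℝ) ^ p := mul_sub _ _ _

/-- The induction skeleton of Theorem 4.1 of the paper: the recursion
satisfied by the regret of the full EFLH algorithm yields the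
`48 C m^((1+ε)/2)` adaptive regret bound. -/
theorem eflh_regret_skeleton_general (ε : ℝ) (hε : 0 < ε) (hε' : ε < 1 / 2)
    (C : ℝ) (hC : 0 < C) (R : ℕ → ℝ)
    (hR₁ : R 1 ≤ C)
    (hRrec : ∀ m : ℕ, 2 ≤ m → ∃ j : ℕ, 1 ≤ j ∧ j < m ∧
      (m : ℝ) ^ (1 - ε) / 2 ≤ (m : ℝ) - (j : ℝ) ∧
      R m ≤ R j + 6 * C * Real.sqrt ((m : ℝ) - (j : ℝ))) :
    ∀ m : ℕ, 1 ≤ m → R m ≤ 48 * C * (m : ℝ) ^ ((1 + ε) / 2) := by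
  have hK : max (R 1) (2 * √2 * (6 * C)) ≤ 48 * C :=
    max_le (by linarith) (by nlinarith [Real.sqrt_two_lt_three_halves])
  exact fun m hm ↦ (eflh_regret_skeleton_general_general hε.le two_pos (by positivity)
    hRrec m hm).trans (by gcongr)
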